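/- Let 𝒳 and 𝒴 be finite sets, p_X a pmf on 𝒳, d : 𝒳 × 𝒴 → [0,∞), D ≥ 0, ε > 0, R > 0, and n a positive integer. Fix y^n ∈ 𝒴^n with empirical type q_Y, and let Z_1^n, …, Z_M^n with M = 2^{⌊nR⌋} be independent random sequences, each with i.i.d. p_X coordinates. Call z^n ∈ 𝒳^n ε-jointly typical with y^n if |p_{z^n}(a) − p_X(a)| ≤ ε for all a ∈ 𝒳 and d^n(z^n, y^n)/n ≤ D. Then Pr(some Z_i^n is ε-jointly typical with y^n) ≤ (n+1)^{|𝒳||𝒴|} · 2^{⌊nR⌋} · 2^{−n·inf_{q ∈ 𝒯} D(q ‖ p_X ⊗ q_Y)}, where 𝒯 is the set of joint pmfs q on 𝒳 × 𝒴 with 𝒴-marginal q_Y whose 𝒳-marginal q_Z satisfies |q_Z(a) − p_X(a)| ≤ ε for all a and which satisfy Σ_{a,b} q(a,b)d(a,b) ≤ D (the infimum over the empty set being +∞). -/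

import Mathlib

/-!
The event is a union over the codewords, so independence reduces the bound to one codeword
(`union_bound`): `Pr(Z^n is typical with y^n) ≤ (n+1)^{|𝒳||𝒴|} 2^{-nr}`.

For a typical `z` of positive probability, the joint type `q` of `(z, y)` lies in the constraint
set, and with `W(a|b) = q(a,b) / q_Y(b)` the factors `q(a,b) / (p_X(a) q_Y(b)) = W(a|b) / p_X(a)`
multiply to `∏ p_X(z_t) = 2^{-n D(q ‖ p_X ⊗ q_Y)} ∏ W(z_t|y_t) ≤ 2^{-nr} ∏ W(z_t|y_t)`
(`prod_le_condProb`). Bounding the last product by the sum over all `(n+1)^{|𝒳||𝒴|}` possible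
count tables, and exchanging the sums over `z` and over tables, finishes the proof: for each
table the products `∏ W(z_t|y_t)` have total mass at most `1` (`sum_prod_condProb_le_one`).
-/

open Finset

noncomputable section

/-- `p` is a probability mass function on the finite type `α`. -/
def IsDist {α : Type} [Fintype α] (p : α → ℝ) : Prop :=
  (∀ a, 0 ≤ p a) ∧ ∑ a, p a = 1

/-- Kullback–Leibler divergence `D(q‖p)` in bits, with the convention `0·log₂(0/p) = 0`. -/
def klBits {α : Type} [Fintype α] (q p : α → ℝ) : ℝ :=
  ∑ a, if q a = 0 then 0 else q a * Real.logb 2 (q a / p a)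

/-- The number of positions at which the pair sequence `(z, y)` takes the value `ab`. -/
def jointCount {𝒳 𝒴 : Type} [DecidableEq 𝒳] [DecidableEq 𝒴] {n : ℕ}
    (z : Fin n → 𝒳) (y : Fin n → 𝒴) (ab : 𝒳 × 𝒴) : ℕ :=
  (univ.filter fun t => (z t, y t) = ab).card

/-- The conditional distribution `W(a|b)` obtained by normalizing the columns of a table `N` of
counts; a zero column gives the zero function, by the convention `x / 0 = 0`. -/
def condProb {𝒳 𝒴 : Type} [Fintype 𝒳] (N : 𝒳 × 𝒴 → ℕ) (a : 𝒳) (b : 𝒴) : ℝ :=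
  (N (a, b) : ℝ) / ∑ a', (N (a', b) : ℝ)

lemma condProb_nonneg {𝒳 𝒴 : Type} [Fintype 𝒳] (N : 𝒳 × 𝒴 → ℕ) (a : 𝒳) (b : 𝒴) :
    0 ≤ condProb N a b := by
  unfold condProb; positivity

lemma sum_condProb_le_one {𝒳 𝒴 : Type} [Fintype 𝒳] (N : 𝒳 × 𝒴 → ℕ) (b : 𝒴) :
    ∑ a, condProb N a b ≤ 1 := by
  unfold condProb
  rw [← Finset.sum_div]
  exact div_self_le_one _

lemma sum_prod_condProb_le_one {𝒳 𝒴 : Type} [Fintype 𝒳] {n : ℕ}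
    (N : 𝒳 × 𝒴 → ℕ) (y : Fin n → 𝒴) :
    ∑ z : Fin n → 𝒳, ∏ t, condProb N (z t) (y t) ≤ 1 := by
  classical
  rw [← Fintype.prod_sum (fun t a => condProb N a (y t))]
  exact Finset.prod_le_one (fun t _ => Finset.sum_nonneg fun a _ => condProb_nonneg N a _)
    (fun t _ => sum_condProb_le_one N _)

lemma jointCount_le {𝒳 𝒴 : Type} [DecidableEq 𝒳] [DecidableEq 𝒴] {n : ℕ}
    (z : Fin n → 𝒳) (y : Fin n → 𝒴) (ab : 𝒳 × 𝒴) : jointCount z y ab ≤ n := by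
  simpa [jointCount] using Finset.card_filter_le (univ : Finset (Fin n)) fun t => (z t, y t) = ab

lemma sum_jointCount_mul {𝒳 𝒴 : Type} [Fintype 𝒳] [DecidableEq 𝒳] [Fintype 𝒴] [DecidableEq 𝒴]
    {n : ℕ} (z : Fin n → 𝒳) (y : Fin n → 𝒴) (f : 𝒳 × 𝒴 → ℝ) :
    ∑ ab, (jointCount z y ab : ℝ) * f ab = ∑ t, f (z t, y t) := by
  rw [← Finset.sum_fiberwise univ (fun t => (z t, y t))]
  refine Finset.sum_congr rfl fun ab _ => ?_
  rw [Finset.sum_congr rfl (g := fun _ => f ab)]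
  · simp [jointCount]
  · intro t ht
    rw [(Finset.mem_filter.1 ht).2]

lemma sum_jointCount_left {𝒳 𝒴 : Type} [Fintype 𝒳] [DecidableEq 𝒳] [DecidableEq 𝒴]
    {n : ℕ} (z : Fin n → 𝒳) (y : Fin n → 𝒴) (b : 𝒴) :
    ∑ a, (jointCount z y (a, b) : ℝ) = ((univ.filter fun t => y t = b).card : ℝ) := by
  rw [Finset.card_eq_sum_card_fiberwise (f := z) (t := univ) (by simp)]
  push_cast
  refine Finset.sum_congr rfl fun a _ => ?_
  rw [jointCount, Finset.filter_filter]
  simp [and_comm]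

lemma sum_jointCount_right {𝒳 𝒴 : Type} [DecidableEq 𝒳] [Fintype 𝒴] [DecidableEq 𝒴]
    {n : ℕ} (z : Fin n → 𝒳) (y : Fin n → 𝒴) (a : 𝒳) :
    ∑ b, (jointCount z y (a, b) : ℝ) = ((univ.filter fun t => z t = a).card : ℝ) := by
  rw [Finset.card_eq_sum_card_fiberwise (f := y) (t := univ) (by simp)]
  push_cast
  refine Finset.sum_congr rfl fun b _ => ?_
  rw [jointCount, Finset.filter_filter]
  simp

/-- Change of measure: if the divergence of the joint type of `(z, y)` from `p_X ⊗ q_Y` is at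
least `r`, then a `z` of positive probability is at most `2^{-nr}` times as likely under `p_X` as under the conditional
type given `y`. -/
lemma prod_le_condProb {𝒳 𝒴 : Type} [Fintype 𝒳] [DecidableEq 𝒳] [Fintype 𝒴] [DecidableEq 𝒴]
    (pX : 𝒳 → ℝ) (n : ℕ) (hn : 0 < n) (y : Fin n → 𝒴) (qY : 𝒴 → ℝ)
    (hqY : ∀ b, ((univ.filter fun t => y t = b).card : ℝ) = n * qY b) (r : ℝ)
    (z : Fin n → 𝒳) (hz : ∀ t, 0 < pX (z t))
    (hr : r ≤ klBits (fun ab => (jointCount z y ab : ℝ) / n) (fun ab => pX ab.1 * qY ab.2)) :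
    ∏ t, pX (z t) ≤ (2 : ℝ) ^ (-(n : ℝ) * r) * ∏ t, condProb (jointCount z y) (z t) (y t) := by
  have hn' : (0 : ℝ) < n := by exact_mod_cast hn
  set L : 𝒳 × 𝒴 → ℝ := fun ab =>
    Real.logb 2 ((jointCount z y ab : ℝ) / n / (pX ab.1 * qY ab.2)) with hL
  have hkl : (n : ℝ) * klBits (fun ab => (jointCount z y ab : ℝ) / n)
      (fun ab => pX ab.1 * qY ab.2) = ∑ t, L (z t, y t) := by
    rw [← sum_jointCount_mul, klBits, Finset.mul_sum]
    refine Finset.sum_congr rfl fun ab _ => ?_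
    split_ifs with h
    · have : (jointCount z y ab : ℝ) = 0 := by
        rcases div_eq_zero_iff.1 h with h | h
        · exact h
        · exact absurd h hn'.ne'
      simp [this]
    · simp only [hL]
      field_simp
  have hW : ∀ t, 0 < condProb (jointCount z y) (z t) (y t) ∧
      pX (z t) = (2 : ℝ) ^ (-L (z t, y t)) * condProb (jointCount z y) (z t) (y t) := by
    intro t
    have hN : (0 : ℝ) < jointCount z y (z t, y t) := by
      have : 0 < jointCount z y (z t, y t) :=
        Finset.card_pos.2 ⟨t, by simp⟩
      exact_mod_cast this
    have hq : 0 < qY (y t) := by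
      have h1 : (0 : ℝ) < ((univ.filter fun s => y s = y t).card : ℝ) := by
        have : 0 < (univ.filter fun s => y s = y t).card := Finset.card_pos.2 ⟨t, by simp⟩
        exact_mod_cast this
      rw [hqY] at h1
      exact pos_of_mul_pos_right h1 hn'.le
    have hc : condProb (jointCount z y) (z t) (y t)
        = (jointCount z y (z t, y t) : ℝ) / (n * qY (y t)) := by
      rw [condProb, sum_jointCount_left, hqY]
    have hp := hz t
    refine ⟨by rw [hc]; positivity, ?_⟩
    rw [hc, Real.rpow_neg (by norm_num), Real.rpow_logb (by norm_num) (by norm_num)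
      (by positivity)]
    field_simp
  have hprod : ∏ t, pX (z t) = (2 : ℝ) ^ (-∑ t, L (z t, y t)) *
      ∏ t, condProb (jointCount z y) (z t) (y t) := by
    rw [← Finset.sum_neg_distrib, Real.rpow_sum_of_pos (by norm_num), ← Finset.prod_mul_distrib]
    exact Finset.prod_congr rfl fun t _ => (hW t).2
  rw [hprod, ← hkl]
  refine mul_le_mul_of_nonneg_right ?_ (Finset.prod_nonneg fun t _ => (hW t).1.le)
  refine Real.rpow_le_rpow_of_exponent_le (by norm_num) ?_
  rw [neg_mul]
  exact neg_le_neg (mul_le_mul_of_nonneg_left hr (Nat.cast_nonneg n))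

/-- For independent draws from a pmf `P`, the probability that at least one of them satisfies `A`
is at most the number of draws times the probability of `A`. -/
lemma union_bound {α : Type} [Fintype α] (P : α → ℝ) (hP : IsDist P) (M : ℕ) (A : α → Prop)
    [DecidablePred A] (inst : DecidablePred fun zs : Fin M → α => ∃ i, A (zs i)) :
    ∑ zs : Fin M → α, (∏ i, P (zs i)) * (if ∃ i, A (zs i) then 1 else 0)
      ≤ M * ∑ z, P z * (if A z then 1 else 0) := by
  classical
  calc ∑ zs : Fin M → α, (∏ i, P (zs i)) * (if ∃ i, A (zs i) then 1 else 0)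
      ≤ ∑ zs : Fin M → α, (∏ i, P (zs i)) * ∑ i, (if A (zs i) then 1 else 0) := by
        refine Finset.sum_le_sum fun zs _ =>
          mul_le_mul_of_nonneg_left ?_ (Finset.prod_nonneg fun i _ => hP.1 _)
        have h0 : ∀ i ∈ (univ : Finset (Fin M)), (0 : ℝ) ≤ if A (zs i) then 1 else 0 := by
          intro i _
          split_ifs <;> norm_num
        split_ifs with h
        · obtain ⟨i, hi⟩ := h
          refine le_trans ?_ (Finset.single_le_sum h0 (Finset.mem_univ i))
          simp [hi]
        · exact Finset.sum_nonneg h0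
    _ = ∑ i : Fin M, ∑ zs : Fin M → α,
          ∏ j, (P (zs j) * if j = i then (if A (zs j) then 1 else 0) else 1) := by
        simp_rw [Finset.mul_sum]
        rw [Finset.sum_comm]
        refine Finset.sum_congr rfl fun i _ => Finset.sum_congr rfl fun zs _ => ?_
        rw [Finset.prod_mul_distrib, Finset.prod_ite_eq' univ i]
        simp
    _ = ∑ i : Fin M, ∑ z, P z * (if A z then 1 else 0) := by
        refine Finset.sum_congr rfl fun i _ => ?_
        rw [← Fintype.prod_sum
          (fun j z => P z * if j = i then (if A z then 1 else 0) else 1)]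
        rw [Finset.prod_eq_single i]
        · simp
        · intro j _ hj
          simp [hj, hP.2]
        · simp
    _ = M * ∑ z, P z * (if A z then 1 else 0) := by simp

/-- Union bound on the probability that some of `2^⌊nR⌋` independent i.i.d.
`p_X` codewords is `ε`-jointly typical with a fixed sequence `y^n` of empirical type `q_Y`:
for any `r` lower-bounding the divergence `D(q ‖ p_X ⊗ q_Y)` over the constraint set `𝒯`
(so `r` can be taken arbitrarily close to `inf_{q ∈ 𝒯} D(q ‖ p_X ⊗ q_Y)`, which is `+∞`
when `𝒯 = ∅`), the probability is at most
`(n+1)^{|𝒳||𝒴|} · 2^⌊nR⌋ · 2^{-n·r}`. -/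
theorem stmt10 {𝒳 𝒴 : Type} [Fintype 𝒳] [DecidableEq 𝒳] [Fintype 𝒴] [DecidableEq 𝒴]
    (pX : 𝒳 → ℝ) (hpX : IsDist pX)
    (d : 𝒳 → 𝒴 → ℝ) (hd : ∀ x y, 0 ≤ d x y)
    (D : ℝ) (hD : 0 ≤ D) (ε : ℝ) (hε : 0 < ε) (R : ℝ) (hR : 0 < R)
    (n : ℕ) (hn : 0 < n)
    (y : Fin n → 𝒴)
    (qY : 𝒴 → ℝ)
    (hqY : ∀ b, ((Finset.univ.filter fun t => y t = b).card : ℝ) = n * qY b)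
    (r : ℝ)
    (hr : ∀ q : 𝒳 × 𝒴 → ℝ, IsDist q →
      (∀ b, ∑ a, q (a, b) = qY b) →
      (∀ a, |(∑ b, q (a, b)) - pX a| ≤ ε) →
      (∑ a, ∑ b, q (a, b) * d a b) ≤ (D : ℝ) →
      r ≤ klBits q (fun ab => pX ab.1 * qY ab.2)) :
    (∑ zs : Fin (2 ^ ⌊(n : ℝ) * R⌋₊) → (Fin n → 𝒳), (∏ i, ∏ t, pX (zs i t)) *
        (if ∃ i, (∀ a, |((Finset.univ.filter fun t => zs i t = a).card : ℝ) / n - pX a| ≤ ε) ∧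
            (∑ t, d (zs i t) (y t)) ≤ (n : ℝ) * D
         then 1 else 0))
      ≤ ((n : ℝ) + 1) ^ (Fintype.card 𝒳 * Fintype.card 𝒴) *
          (2 : ℝ) ^ (⌊(n : ℝ) * R⌋₊ : ℕ) * (2 : ℝ) ^ (-(n : ℝ) * r) := by
  classical
  have hn' : (0 : ℝ) < n := by exact_mod_cast hn
  set A : (Fin n → 𝒳) → Prop := fun z =>
    (∀ a, |((Finset.univ.filter fun t => z t = a).card : ℝ) / n - pX a| ≤ ε) ∧
      (∑ t, d (z t) (y t)) ≤ (n : ℝ) * D with hA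
  have hP : IsDist (fun z : Fin n → 𝒳 => ∏ t, pX (z t)) := by
    refine ⟨fun z => Finset.prod_nonneg fun t _ => hpX.1 _, ?_⟩
    rw [← Fintype.prod_sum (fun (_ : Fin n) a => pX a)]
    simp [hpX.2]
  have hpow : (0 : ℝ) < (2 : ℝ) ^ (-(n : ℝ) * r) := Real.rpow_pos_of_pos (by norm_num) _
  have hW0 : ∀ (N : 𝒳 × 𝒴 → Fin (n + 1)) (z : Fin n → 𝒳),
      0 ≤ ∏ t, condProb (fun ab => (N ab : ℕ)) (z t) (y t) :=
    fun N z => Finset.prod_nonneg fun t _ => condProb_nonneg _ _ _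
  have hpt : ∀ z : Fin n → 𝒳, (∏ t, pX (z t)) * (if A z then 1 else 0)
      ≤ (2 : ℝ) ^ (-(n : ℝ) * r) *
        ∑ N : 𝒳 × 𝒴 → Fin (n + 1), ∏ t, condProb (fun ab => (N ab : ℕ)) (z t) (y t) := by
    intro z
    have hnn : 0 ≤ (2 : ℝ) ^ (-(n : ℝ) * r) *
        ∑ N : 𝒳 × 𝒴 → Fin (n + 1), ∏ t, condProb (fun ab => (N ab : ℕ)) (z t) (y t) :=
      mul_nonneg hpow.le (Finset.sum_nonneg fun N _ => hW0 N z)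
    by_cases hAz : A z
    swap
    · simpa [hAz] using hnn
    by_cases hz : ∀ t, 0 < pX (z t)
    swap
    · push Not at hz
      obtain ⟨t, ht⟩ := hz
      have h0 : ∏ t, pX (z t) = 0 :=
        Finset.prod_eq_zero (Finset.mem_univ t) (le_antisymm ht (hpX.1 _))
      rw [h0, zero_mul]
      exact hnn
    rw [if_pos hAz, mul_one]
    -- The joint type of `(z, y)` belongs to the constraint set.
    have hkl : r ≤ klBits (fun ab => (jointCount z y ab : ℝ) / n)
        (fun ab => pX ab.1 * qY ab.2) := by
      refine hr _ ⟨fun ab => by positivity, ?_⟩ ?_ ?_ ?_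
      · have h := sum_jointCount_mul z y (fun _ => (1 : ℝ))
        simp only [mul_one] at h
        rw [← Finset.sum_div, h]
        simp [hn'.ne']
      · intro b
        rw [← Finset.sum_div, sum_jointCount_left, hqY]
        field_simp
      · intro a
        rw [← Finset.sum_div, sum_jointCount_right]
        exact hAz.1 a
      · have h := sum_jointCount_mul z y (fun ab => d ab.1 ab.2)
        rw [Fintype.sum_prod_type] at h
        have h2 : ∑ a, ∑ b, (jointCount z y (a, b) : ℝ) / n * d a b
            = (∑ t, d (z t) (y t)) / n := by
          rw [← h, Finset.sum_div]
          refine Finset.sum_congr rfl fun a _ => ?_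
          rw [Finset.sum_div]
          refine Finset.sum_congr rfl fun b _ => ?_
          ring
        rw [h2, div_le_iff₀ hn', mul_comm]
        exact hAz.2
    refine (prod_le_condProb pX n hn y qY hqY r z hz hkl).trans
      (mul_le_mul_of_nonneg_left ?_ hpow.le)
    obtain ⟨N₀, hN₀⟩ : ∃ N₀ : 𝒳 × 𝒴 → Fin (n + 1), jointCount z y = fun ab => (N₀ ab : ℕ) :=
      ⟨fun ab => ⟨jointCount z y ab, Nat.lt_succ_of_le (jointCount_le z y ab)⟩, rfl⟩
    rw [hN₀]
    have hs := Finset.single_le_sum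
      (f := fun N : 𝒳 × 𝒴 → Fin (n + 1) => ∏ t, condProb (fun ab => (N ab : ℕ)) (z t) (y t))
      (s := univ) (fun N _ => hW0 N z) (Finset.mem_univ N₀)
    exact hs
  have hone : ∑ z : Fin n → 𝒳, (∏ t, pX (z t)) * (if A z then 1 else 0)
      ≤ (2 : ℝ) ^ (-(n : ℝ) * r) * ((n : ℝ) + 1) ^ (Fintype.card 𝒳 * Fintype.card 𝒴) := by
    refine (Finset.sum_le_sum fun z _ => hpt z).trans ?_
    rw [← Finset.mul_sum, Finset.sum_comm]
    refine mul_le_mul_of_nonneg_left ?_ hpow.le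
    refine (Finset.sum_le_sum fun N _ =>
      sum_prod_condProb_le_one (fun ab => (N ab : ℕ)) y).trans (le_of_eq ?_)
    simp
  have hM : ((2 ^ ⌊(n : ℝ) * R⌋₊ : ℕ) : ℝ) = (2 : ℝ) ^ (⌊(n : ℝ) * R⌋₊ : ℕ) := by push_cast; rfl
  rw [← hM]
  generalize 2 ^ ⌊(n : ℝ) * R⌋₊ = M
  have hu := union_bound (fun z : Fin n → 𝒳 => ∏ t, pX (z t)) hP M A (Classical.decPred _)
  refine le_trans (le_of_eq (Finset.sum_congr rfl fun zs _ => ?_)) (hu.trans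
    ((mul_le_mul_of_nonneg_left hone (Nat.cast_nonneg _)).trans (le_of_eq (by ring))))
  -- The two sides differ only in the decidability instance of the event.
  congr

end
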